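/- If a is a nonzero completely strongly hollow element of a multiplicative lattice Q, then κ(a) = ⋁{ k | a ≰ k } is completely strongly irreducible: whenever ⋀_{i∈Ω} r_i ≤ κ(a) for a family {r_i}, there exists i with r_i ≤ κ(a). -/

import Mathlib

/-- A multiplicative lattice: a complete lattice with a commutative, associative
multiplication distributing over arbitrary joins, with the top element as identity. -/
class MulLattice (Q : Type*) extends CompleteLattice Q, CommMonoid Q where
  mul_sSup : ∀ (a : Q) (s : Set Q), a * sSup s = ⨆ x ∈ s, a * x
  one_eq_top : (1 : Q) = ⊤

section OrderDefs
variable {Q : Type*} [CompleteLattice Q]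

/-- `a` is strongly hollow if `a ≤ j ⊔ k` implies `a ≤ j` or `a ≤ k`. -/
def StronglyHollow (a : Q) : Prop := ∀ j k : Q, a ≤ j ⊔ k → a ≤ j ∨ a ≤ k

/-- `a` is completely strongly hollow if whenever `a` is below an arbitrary join,
it is below one of the joinands. -/
def CompletelyStronglyHollow (a : Q) : Prop :=
  ∀ s : Set Q, a ≤ sSup s → ∃ x ∈ s, a ≤ x

/-- `κ(a)` is the join of all elements not above `a`. -/
def kappa (a : Q) : Q := sSup {k : Q | ¬ a ≤ k}

end OrderDefs

/-- The mlResidual `(a : b)`. -/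
def mlResidual {Q : Type*} [MulLattice Q] (a b : Q) : Q := sSup {x : Q | x * b ≤ a}

theorem stmt10 {Q : Type*} [MulLattice Q] (a : Q) (ha : a ≠ ⊥)
    (hcsh : CompletelyStronglyHollow a) :
    ∀ s : Set Q, sInf s ≤ kappa a → ∃ r ∈ s, r ≤ kappa a := by
  intro s hs
  by_contra h
  have h1 : a ≤ sInf s := by
    refine le_sInf fun r hr => ?_
    by_contra har
    exact h ⟨r, hr, le_sSup har⟩
  obtain ⟨x, hx, hax⟩ := hcsh _ (h1.trans hs)
  exact hx hax
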